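/- arXiv:2002.05394 — 2 statements merged into one kernel-verified Lean document; each statement's English description precedes it below -/
import Mathlib

section
/- Let G be a group, H a complex Hilbert space, F a finite subset of G, and d : G → G → B(H) such that for each r ∈ F the family p ↦ ‖d(r,p)‖ is bounded above. Then there exists a bounded operator T on ℓ²(G,H) satisfying (T ξ)(p) = ∑_{r ∈ F} d(r,p)(ξ(r⁻¹ p)) for all ξ ∈ ℓ²(G,H) and p ∈ G, and ‖T‖ ≤ ∑_{r ∈ F} ⨆_{p ∈ G} ‖d(r,p)‖. -/
/-!
A single diagonal `ξ ↦ (p ↦ d r p (ξ (r⁻¹ * p)))` is the reindexing of `ξ` along the injective map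
`p ↦ r⁻¹ * p`, which is a contraction of `ℓ²`, followed by a fibrewise application of operators of
norm at most `⨆ p, ‖d r p‖`. The triangle inequality over `F` bounds the sum of the diagonals.
-/

open Function
open scoped ENNReal

section Reindexing

variable {𝕜 α β : Type*} {E : α → Type*} [∀ a, NormedAddCommGroup (E a)] {p : ℝ≥0∞}

theorem memℓp_comp_injective {f : ∀ a, E a} (hf : Memℓp f p) {σ : β → α} (hσ : Injective σ) :
    Memℓp (fun b => f (σ b)) p := by
  rcases p.trichotomy with rfl | rfl | hp
  · exact memℓp_zero (hf.finite_dsupport.preimage hσ.injOn)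
  · exact memℓp_infty (hf.bddAbove.mono (Set.range_comp_subset_range σ fun a => ‖f a‖))
  · exact memℓp_gen ((hf.summable hp).comp_injective hσ)

/-- The pullback `f ∘ σ` of an `ℓᵖ` family `f` along an injective map `σ` of index types, with
fibres `E (σ b)`. -/
def lpComp (f : lp E p) {σ : β → α} (hσ : Injective σ) : lp (fun b => E (σ b)) p :=
  ⟨fun b => f (σ b), memℓp_comp_injective (lp.memℓp f) hσ⟩

theorem norm_lpComp_le (f : lp E p) {σ : β → α} (hσ : Injective σ) : ‖lpComp f hσ‖ ≤ ‖f‖ := by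
  rcases p.trichotomy with rfl | rfl | hp
  · rw [lp.norm_eq_card_dsupport, lp.norm_eq_card_dsupport, Nat.cast_le]
    refine Finset.card_le_card_of_injOn σ (fun b hb => ?_) hσ.injOn
    simpa [lpComp] using hb
  · exact lp.norm_le_of_forall_le (lp.norm_nonneg' f) fun b =>
      lp.norm_apply_le_norm ENNReal.top_ne_zero f (σ b)
  · refine lp.norm_le_of_forall_sum_le hp (lp.norm_nonneg' f) fun s => ?_
    calc ∑ b ∈ s, ‖f (σ b)‖ ^ p.toReal
        = ∑ a ∈ s.map ⟨σ, hσ⟩, ‖f a‖ ^ p.toReal := by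
          rw [Finset.sum_map, Embedding.coeFn_mk]
      _ ≤ ‖f‖ ^ p.toReal := lp.sum_rpow_le_norm_rpow hp f _

variable [NormedRing 𝕜] [∀ a, Module 𝕜 (E a)] [∀ a, IsBoundedSMul 𝕜 (E a)]

variable (𝕜 E p) in
/-- Pullback along an injective map of index types, as a continuous linear map between `ℓᵖ`
spaces. -/
noncomputable def lpCompCLM [Fact (1 ≤ p)] {σ : β → α} (hσ : Injective σ) :
    lp E p →L[𝕜] lp (fun b => E (σ b)) p :=
  LinearMap.mkContinuous
    { toFun f := lpComp f hσ
      map_add' _ _ := rfl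
      map_smul' _ _ := rfl }
    1 fun f => (norm_lpComp_le f hσ).trans_eq (one_mul _).symm

end Reindexing

section Diagonals

variable {ι α β 𝕜 : Type*} [NontriviallyNormedField 𝕜] {E : α → Type*} {F : β → Type*}
  [∀ a, NormedAddCommGroup (E a)] [∀ a, NormedSpace 𝕜 (E a)]
  [∀ b, NormedAddCommGroup (F b)] [∀ b, NormedSpace 𝕜 (F b)] {p : ℝ≥0∞} [Fact (1 ≤ p)]

theorem norm_lpCompCLM_le_one {σ : β → α} (hσ : Injective σ) : ‖lpCompCLM 𝕜 E p hσ‖ ≤ 1 :=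
  LinearMap.mkContinuous_norm_le _ zero_le_one _

theorem exists_weighted_lpComp {σ : β → α} (hσ : Injective σ) (e : ∀ b, E (σ b) →L[𝕜] F b)
    (he : BddAbove (Set.range fun b => ‖e b‖)) :
    ∃ T : lp E p →L[𝕜] lp F p, (∀ ξ b, T ξ b = e b (ξ (σ b))) ∧ ‖T‖ ≤ ⨆ b, ‖e b‖ := by
  have iSup_nonneg : 0 ≤ ⨆ b, ‖e b‖ := Real.iSup_nonneg fun b => norm_nonneg (e b)
  let M := lp.mapCLM p e iSup_nonneg (le_ciSup he)
  refine ⟨M ∘L lpCompCLM 𝕜 E p hσ, fun ξ b => rfl, ?_⟩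
  calc ‖M ∘L lpCompCLM 𝕜 E p hσ‖
      ≤ ‖M‖ * ‖lpCompCLM 𝕜 E p hσ‖ := M.opNorm_comp_le _
    _ ≤ (⨆ b, ‖e b‖) * 1 := by
        gcongr
        · exact lp.norm_mapCLM_le p e iSup_nonneg (le_ciSup he)
        · exact norm_lpCompCLM_le_one hσ
    _ = ⨆ b, ‖e b‖ := mul_one _

theorem stmt_7_general (s : Finset ι) (σ : ι → β → α) (hσ : ∀ i ∈ s, Injective (σ i))
    (d : ∀ i b, E (σ i b) →L[𝕜] F b)
    (hd : ∀ i ∈ s, BddAbove (Set.range fun b => ‖d i b‖)) :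
    ∃ T : lp E p →L[𝕜] lp F p,
      (∀ ξ b, T ξ b = ∑ i ∈ s, d i b (ξ (σ i b))) ∧ ‖T‖ ≤ ∑ i ∈ s, ⨆ b, ‖d i b‖ := by
  choose! T hT_apply hT_norm using fun i hi =>
    exists_weighted_lpComp (p := p) (hσ i hi) (d i) (hd i hi)
  refine ⟨∑ i ∈ s, T i, fun ξ b => ?_, norm_sum_le_of_le s hT_norm⟩
  rw [sum_apply, lp.coeFn_sum, Finset.sum_apply]
  exact Finset.sum_congr rfl fun i hi => hT_apply i hi ξ b

end Diagonals

theorem stmt_7 {G : Type*} [Group G] {H : Type*} [NormedAddCommGroup H]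
    [InnerProductSpace ℂ H] [CompleteSpace H]
    (F : Finset G) (d : G → G → (H →L[ℂ] H))
    (hd : ∀ r ∈ F, BddAbove (Set.range fun p : G => ‖d r p‖)) :
    ∃ T : lp (fun _ : G => H) 2 →L[ℂ] lp (fun _ : G => H) 2,
      (∀ (ξ : lp (fun _ : G => H) 2) (p : G),
        (T ξ : ∀ _ : G, H) p = ∑ r ∈ F, d r p (ξ (r⁻¹ * p))) ∧
      ‖T‖ ≤ ∑ r ∈ F, ⨆ p : G, ‖d r p‖ :=
  stmt_7_general (E := fun _ => H) (F := fun _ => H) F (fun r p => r⁻¹ * p)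
    (fun r _ => mul_right_injective r⁻¹) d hd
end

section
/- Let W : ℓ²(G,H) → ℓ²(G×G,H) be defined by (W ξ)(p,q) = ξ(q) if p = q and (W ξ)(p,q) = 0 if p ≠ q. Then (a) W is a well-defined linear isometry; and (b) for every a ∈ A and r ∈ G, if Δ is a bounded operator on ℓ²(G×G,H) satisfying (Δ ζ)(p,q) = u(α(q⁻¹)(a))(ζ(r⁻¹ p, r⁻¹ q)) for all ζ, p, q (the operator λ_r ⊗ π(a)λ_r), then W* ∘ Δ ∘ W = π(a) ∘ λ_r. -/
/-!
The map `W` is extension by zero along the diagonal `G → G × G`, hence isometric: `W* W = 1`. Since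
left translation by `r⁻¹` is injective, `(r⁻¹ p, r⁻¹ q)` lies on the diagonal exactly when `(p, q)`
does, so `Δ W = W π(a) λ_r`. Multiplying on the left by `W*` gives the compression identity.
-/

open Function
open ContinuousLinearMap (adjoint)
open scoped ENNReal

section ExtendByZero

variable {ι κ E : Type*} [NormedAddCommGroup E] {f : ι → κ} {p : ℝ≥0∞}

theorem norm_rpow_extend_zero (g : ι → E) {r : ℝ} (hr : r ≠ 0) :
    (fun k => ‖extend f g 0 k‖ ^ r) = extend f (fun i => ‖g i‖ ^ r) 0 := by
  funext k
  rw [apply_extend (fun x : E => ‖x‖ ^ r)]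
  congr 1
  funext j
  simp [Real.zero_rpow hr]

theorem norm_extend_zero_le {g : ι → E} {C : ℝ} (hC : 0 ≤ C) (hg : ∀ i, ‖g i‖ ≤ C) (k : κ) :
    ‖extend f g 0 k‖ ≤ C := by
  classical
  rw [extend_def]
  split_ifs
  · exact hg _
  · simpa using hC

theorem memℓp_extend_zero (hf : Injective f) {g : ι → E} (hg : Memℓp g p) :
    Memℓp (extend f g 0) p := by
  rcases p.trichotomy with rfl | rfl | hp
  · exact memℓp_zero ((hg.finite_dsupport.image f).subset support_extend_zero_subset)
  · obtain ⟨C, hC⟩ := hg.bddAbove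
    have hg_le (i : ι) : ‖g i‖ ≤ max C 0 := le_max_of_le_left (hC ⟨i, rfl⟩)
    exact memℓp_infty ⟨max C 0,
      Set.forall_mem_range.2 (norm_extend_zero_le (le_max_right _ _) hg_le)⟩
  · rw [memℓp_gen_iff hp, norm_rpow_extend_zero g hp.ne', summable_extend_zero hf]
    exact hg.summable hp

theorem lp_norm_eq_of_coe_eq_extend_zero (hf : Injective f)
    {ξ : lp (fun _ : ι => E) p} {ζ : lp (fun _ : κ => E) p} (h : ⇑ζ = extend f ξ 0) :
    ‖ζ‖ = ‖ξ‖ := by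
  rcases p.trichotomy with rfl | rfl | hp
  · have hsupp : {k | ζ k ≠ 0} = f '' {i | ξ i ≠ 0} := by
      rw [h]
      exact support_extend_zero hf
    rw [lp.norm_eq_card_dsupport, lp.norm_eq_card_dsupport, ← Set.ncard_eq_toFinset_card _ _,
      ← Set.ncard_eq_toFinset_card _ _, hsupp, Set.ncard_image_of_injective _ hf]
  · apply le_antisymm
    · refine lp.norm_le_of_forall_le (lp.norm_nonneg' ξ) fun k => ?_
      rw [h]
      exact norm_extend_zero_le (lp.norm_nonneg' ξ) (lp.norm_apply_le_norm ENNReal.top_ne_zero ξ) k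
    · refine lp.norm_le_of_forall_le (lp.norm_nonneg' ζ) fun i => ?_
      rw [← hf.extend_apply ξ 0 i, ← h]
      exact lp.norm_apply_le_norm ENNReal.top_ne_zero ζ (f i)
  · have hsum : HasSum (fun i => ‖ξ i‖ ^ p.toReal) (‖ζ‖ ^ p.toReal) := by
      rw [← hasSum_extend_zero hf, ← norm_rpow_extend_zero _ hp.ne', ← h]
      exact lp.hasSum_norm hp ζ
    exact (Real.rpow_left_inj (lp.norm_nonneg' ζ) (lp.norm_nonneg' ξ) hp.ne').1
      (hsum.unique (lp.hasSum_norm hp ξ))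

variable (𝕜 : Type*) [NormedField 𝕜] [NormedSpace 𝕜 E]

/-- Extension by zero of `ℓᵖ` families along an injective map of index types, as a linear
isometry. -/
noncomputable def lpExtendByZero [Fact (1 ≤ p)] (hf : Injective f) :
    lp (fun _ : ι => E) p →ₗᵢ[𝕜] lp (fun _ : κ => E) p where
  toFun ξ := ⟨extend f ξ 0, memℓp_extend_zero hf (lp.memℓp ξ)⟩
  map_add' ξ η := lp.ext (by simpa using! extend_add f ξ η 0 0)
  map_smul' c ξ := lp.ext (by simpa using extend_smul c f ξ 0)
  norm_map' _ := lp_norm_eq_of_coe_eq_extend_zero hf rfl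

end ExtendByZero

section Diagonal

variable {ι 𝕜 E : Type*} [NormedField 𝕜] [NormedAddCommGroup E] [NormedSpace 𝕜 E]
  {p : ℝ≥0∞} [Fact (1 ≤ p)]

variable (𝕜 p) in
/-- The linear isometry from `ℓᵖ(ι, E)` to `ℓᵖ(ι × ι, E)` that places a family on the diagonal; the
paper's `W` is the case `p = 2`. -/
noncomputable def lpDiagonal : lp (fun _ : ι => E) p →ₗᵢ[𝕜] lp (fun _ : ι × ι => E) p :=
  lpExtendByZero 𝕜 diag_injective

theorem lpDiagonal_apply [DecidableEq ι] (ξ : lp (fun _ : ι => E) p) (i j : ι) :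
    lpDiagonal 𝕜 p ξ (i, j) = if i = j then ξ j else 0 := by
  change extend Function.diag ξ 0 (i, j) = _
  split_ifs with hij
  · subst hij
    exact diag_injective.extend_apply ξ 0 i
  · refine extend_apply' _ _ _ ?_
    rintro ⟨k, hk⟩
    obtain ⟨rfl, rfl⟩ := Prod.mk.inj hk
    exact hij rfl

theorem comp_lpDiagonal_eq_lpDiagonal_comp {σ : ι → ι} (hσ : Injective σ) {T : ι → E →L[𝕜] E}
    {D : lp (fun _ : ι => E) p →L[𝕜] lp (fun _ : ι => E) p}
    (hD : ∀ ξ i, D ξ i = T i (ξ (σ i)))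
    {Δ : lp (fun _ : ι × ι => E) p →L[𝕜] lp (fun _ : ι × ι => E) p}
    (hΔ : ∀ ζ i j, Δ ζ (i, j) = T j (ζ (σ i, σ j))) :
    Δ ∘L (lpDiagonal 𝕜 p).toContinuousLinearMap =
      (lpDiagonal 𝕜 p).toContinuousLinearMap ∘L D := by
  classical
  ext ξ ⟨i, j⟩
  calc
    Δ (lpDiagonal 𝕜 p ξ) (i, j) = T j (if σ i = σ j then ξ (σ j) else 0) := by
      rw [hΔ, lpDiagonal_apply]
    _ = if i = j then D ξ j else 0 := by
      simp only [hσ.eq_iff, hD, apply_ite (T j), map_zero]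
    _ = lpDiagonal 𝕜 p (D ξ) (i, j) := (lpDiagonal_apply (D ξ) i j).symm

end Diagonal

theorem adjoint_comp_comp_eq_of_intertwines {𝕜 E F : Type*} [RCLike 𝕜]
    [NormedAddCommGroup E] [InnerProductSpace 𝕜 E] [CompleteSpace E]
    [NormedAddCommGroup F] [InnerProductSpace 𝕜 F] [CompleteSpace F]
    {V : E →L[𝕜] F} (hV : Isometry V) {S : F →L[𝕜] F} {T : E →L[𝕜] E} (h : S ∘L V = V ∘L T) :
    adjoint V ∘L S ∘L V = T := by
  have hVV : adjoint V ∘L V = 1 := V.isometry_iff_adjoint_comp_self.1 hV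
  rw [h, ← ContinuousLinearMap.comp_assoc, hVV, ContinuousLinearMap.one_def,
    ContinuousLinearMap.id_comp]

theorem stmt_13_general {ι : Type*} [DecidableEq ι] {𝕜 : Type*} [RCLike 𝕜] {H : Type*}
    [NormedAddCommGroup H] [InnerProductSpace 𝕜 H] [CompleteSpace H] :
    ∃ W : lp (fun _ : ι => H) 2 →L[𝕜] lp (fun _ : ι × ι => H) 2,
      (∀ (ξ : lp (fun _ : ι => H) 2) (i j : ι), W ξ (i, j) = if i = j then ξ j else 0) ∧
      Isometry W ∧
      ∀ (T : ι → H →L[𝕜] H) (σ : ι → ι), Injective σ →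
        ∀ (D : lp (fun _ : ι => H) 2 →L[𝕜] lp (fun _ : ι => H) 2)
          (Δ : lp (fun _ : ι × ι => H) 2 →L[𝕜] lp (fun _ : ι × ι => H) 2),
          (∀ ξ i, D ξ i = T i (ξ (σ i))) →
          (∀ ζ i j, Δ ζ (i, j) = T j (ζ (σ i, σ j))) →
          adjoint W ∘L Δ ∘L W = D :=
  ⟨(lpDiagonal 𝕜 2).toContinuousLinearMap, lpDiagonal_apply, (lpDiagonal 𝕜 2).isometry,
    fun _ _ hσ _ _ hD hΔ => adjoint_comp_comp_eq_of_intertwines (lpDiagonal 𝕜 2).isometry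
      (comp_lpDiagonal_eq_lpDiagonal_comp hσ hD hΔ)⟩

theorem stmt_13 {G : Type*} [Group G] [DecidableEq G] {H : Type*} [NormedAddCommGroup H]
    [InnerProductSpace ℂ H] [CompleteSpace H]
    {A : Type*} [NormedRing A] [StarRing A] [CStarRing A] [NormedAlgebra ℂ A]
    [StarModule ℂ A] [CompleteSpace A]
    (u : A →⋆ₐ[ℂ] (H →L[ℂ] H)) (α : G → (A ≃⋆ₐ[ℂ] A))
    (hα : ∀ (g h : G) (a : A), α (g * h) a = α g (α h a))
    (lam : G → (lp (fun _ : G => H) 2 →L[ℂ] lp (fun _ : G => H) 2))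
    (hlam : ∀ (r : G) (ξ : lp (fun _ : G => H) 2) (s : G),
      (lam r ξ : ∀ _ : G, H) s = ξ (r⁻¹ * s))
    (π : A → (lp (fun _ : G => H) 2 →L[ℂ] lp (fun _ : G => H) 2))
    (hπ : ∀ (a : A) (ξ : lp (fun _ : G => H) 2) (s : G),
      (π a ξ : ∀ _ : G, H) s = u (α s⁻¹ a) (ξ s)) :
    ∃ W : lp (fun _ : G => H) 2 →L[ℂ] lp (fun _ : G × G => H) 2,
      (∀ (ξ : lp (fun _ : G => H) 2) (p q : G),
        (W ξ : ∀ _ : G × G, H) (p, q) = if p = q then ξ q else 0) ∧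
      Isometry W ∧
      (∀ (a : A) (r : G)
        (Δ : lp (fun _ : G × G => H) 2 →L[ℂ] lp (fun _ : G × G => H) 2),
        (∀ (ζ : lp (fun _ : G × G => H) 2) (p q : G),
          (Δ ζ : ∀ _ : G × G, H) (p, q) = u (α q⁻¹ a) (ζ (r⁻¹ * p, r⁻¹ * q))) →
        (ContinuousLinearMap.adjoint W) ∘L Δ ∘L W = π a ∘L lam r) := by
  obtain ⟨W, hW, hW_isometry, hW_compress⟩ := stmt_13_general (ι := G) (𝕜 := ℂ) (H := H)
  exact ⟨W, hW, hW_isometry, fun a r Δ hΔ =>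
    hW_compress (fun s => u (α s⁻¹ a)) (r⁻¹ * ·) (mul_right_injective r⁻¹) _ Δ
      (fun ξ s => by rw [ContinuousLinearMap.comp_apply, hπ, hlam]) hΔ⟩
end
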